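/- Let H be an undirected graph without loops and k ≥ −1 an integer. If the polyhedral complex Hom(K_2, H) is k-connected, then χ(H) ≥ k + 3. -/

import Mathlib

open Finset

noncomputable section
namespace Lovasz




structure Graph where
  V : Type
  fintypeV : Fintype V
  adj : V → V → Prop
  symm : ∀ {x y : V}, adj x y → adj y x

attribute [instance] Graph.fintypeV

def Graph.Loopless (G : Graph) : Prop := ∀ v : G.V, ¬ G.adj v v

def GraphHom (G H : Graph) : Type :=
  {f : G.V → H.V // ∀ x y : G.V, G.adj x y → H.adj (f x) (f y)}

@[reducible] def completeGraph (n : ℕ) : Graph where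
  V := Fin n
  fintypeV := inferInstance
  adj x y := x ≠ y
  symm h := h.symm

def chromaticNumber (G : Graph) : ℕ :=
  sInf {n : ℕ | Nonempty (GraphHom G (completeGraph n))}

@[reducible] def oddCycle (r : ℕ) : Graph where
  V := ZMod (2 * r + 1)
  fintypeV := inferInstance
  adj x y := x = y + 1 ∨ y = x + 1
  symm h := h.symm

/-- The cycle with `m` vertices (trivial graph for `m = 0`). -/
@[reducible] def cycleGraph : ℕ → Graph
  | 0 => ⟨Empty, inferInstance, fun _ _ => False, fun h => h⟩
  | (n+1) =>
    { V := ZMod (n+1)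
      fintypeV := inferInstance
      adj := fun x y => x = y + 1 ∨ y = x + 1
      symm := fun h => h.symm }

/-- The geometric realization of the polyhedral complex `Hom(G,H)`: the space of functions
assigning to each vertex of `G` a probability distribution on `V(H)`, such that any choice of
vertices from the supports yields a graph homomorphism. -/
abbrev HomComplex (G H : Graph) : Type :=
  {f : G.V → H.V → ℝ //
    (∀ v w, 0 ≤ f v w) ∧ (∀ v, ∑ w, f v w = 1) ∧
    ∀ x y : G.V, G.adj x y → ∀ a b : H.V, f x a ≠ 0 → f y b ≠ 0 → H.adj a b}

/-- The geometric realization of the simplicial complex `Hom₊(G,H)`. -/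
abbrev HomPlus (G H : Graph) : Type :=
  {f : G.V → H.V → ℝ //
    (∀ v w, 0 ≤ f v w) ∧ (∑ v, ∑ w, f v w = 1) ∧
    ∀ x y : G.V, G.adj x y → ∀ a b : H.V, f x a ≠ 0 → f y b ≠ 0 → H.adj a b}

/-- The geometric realization of the independence complex `Ind(G)`. -/
abbrev IndSpace (G : Graph) : Type :=
  {f : G.V → ℝ //
    (∀ v, 0 ≤ f v) ∧ (∑ v, f v = 1) ∧
    ∀ x y : G.V, G.adj x y → f x = 0 ∨ f y = 0}

/-- The map `Hom(G',H) → Hom(G,H)` induced by a graph homomorphism `ι : G → G'`. -/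
def precompHom {G G' : Graph} (ι : GraphHom G G') (H : Graph) :
    C(HomComplex G' H, HomComplex G H) where
  toFun f := ⟨fun v w => f.1 (ι.1 v) w,
    fun v w => f.2.1 (ι.1 v) w,
    fun v => f.2.2.1 (ι.1 v),
    fun x y h a b ha hb => f.2.2.2 (ι.1 x) (ι.1 y) (ι.2 x y h) a b ha hb⟩
  continuous_toFun := by
    apply Continuous.subtype_mk
    apply continuous_pi; intro v
    apply continuous_pi; intro w
    exact (continuous_apply w).comp ((continuous_apply (ι.1 v)).comp continuous_subtype_val)

/-- The map `Hom₊(G',H) → Hom₊(G,H)` induced by an *invertible* graph homomorphism is only used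
for involutions, where precomposition preserves the normalization; for bijective `ι` the total
sum is preserved. -/
def precompHomPlus {G : Graph} (ι : GraphHom G G) (hbij : Function.Bijective ι.1) (H : Graph) :
    C(HomPlus G H, HomPlus G H) where
  toFun f := ⟨fun v w => f.1 (ι.1 v) w,
    fun v w => f.2.1 (ι.1 v) w,
    by
      show ∑ v, ∑ w, f.1 (ι.1 v) w = 1
      have h2 : ∑ v, ∑ w, f.1 (ι.1 v) w = ∑ v, ∑ w, f.1 v w :=
        Fintype.sum_bijective ι.1 hbij _ _ (fun v => rfl)
      rw [h2]; exact f.2.2.1,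
    fun x y h a b ha hb => f.2.2.2 (ι.1 x) (ι.1 y) (ι.2 x y h) a b ha hb⟩
  continuous_toFun := by
    apply Continuous.subtype_mk
    apply continuous_pi; intro v
    apply continuous_pi; intro w
    exact (continuous_apply w).comp ((continuous_apply (ι.1 v)).comp continuous_subtype_val)

lemma precompHom_invol {G : Graph} (γ : GraphHom G G) (hγ : ∀ v, γ.1 (γ.1 v) = v) (H : Graph) :
    ∀ f, precompHom γ H (precompHom γ H f) = f := by
  intro f
  apply Subtype.ext
  funext v w
  show f.1 (γ.1 (γ.1 v)) w = f.1 v w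
  rw [hγ]

lemma precompHomPlus_invol {G : Graph} (γ : GraphHom G G) (hbij : Function.Bijective γ.1)
    (hγ : ∀ v, γ.1 (γ.1 v) = v) (H : Graph) :
    ∀ f, precompHomPlus γ hbij H (precompHomPlus γ hbij H f) = f := by
  intro f
  apply Subtype.ext
  funext v w
  show f.1 (γ.1 (γ.1 v)) w = f.1 v w
  rw [hγ]

/-- The reflection `x ↦ -x` of the odd cycle. -/
def cycleReflect (r : ℕ) : GraphHom (oddCycle r) (oddCycle r) :=
  ⟨fun x => (-x : ZMod (2 * r + 1)), by
    intro x y h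
    change (x : ZMod (2 * r + 1)) = y + 1 ∨ y = x + 1 at h
    change (-x : ZMod (2 * r + 1)) = -y + 1 ∨ (-y : ZMod (2 * r + 1)) = -x + 1
    rcases h with h | h
    · right; rw [h]; ring
    · left; rw [h]; ring⟩

lemma cycleReflect_invol (r : ℕ) : ∀ v, (cycleReflect r).1 ((cycleReflect r).1 v) = v :=
  fun v => neg_neg (v : ZMod (2 * r + 1))

lemma cycleReflect_bijective (r : ℕ) : Function.Bijective (cycleReflect r).1 :=
  Function.Involutive.bijective (fun v => neg_neg (v : ZMod (2 * r + 1)))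

open scoped Topology in
/-- `k`-connectedness (`k ≥ -1`): nonempty, path-connected (when `k ≥ 0`), and all homotopy
groups `π_i` vanish for `1 ≤ i ≤ k`. -/
def KConnected (k : ℤ) (X : Type) [TopologicalSpace X] : Prop :=
  Nonempty X ∧ ((0:ℤ) ≤ k → PathConnectedSpace X) ∧
    ∀ i : ℕ, 1 ≤ i → (i : ℤ) ≤ k → ∀ x : X, Subsingleton (HomotopyGroup (Fin i) X x)

/-!
A coloring `H → Kₙ` induces a `ℤ/2`-map `Hom(K₂, H) → Hom(K₂, Kₙ)`, and `f ↦ f 0 - f 1` is a nowhere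
vanishing odd map from `Hom(K₂, Kₙ)` to the `(n - 1)`-dimensional space of vectors with coordinate
sum zero. If `Hom(K₂, H)` is `k`-connected, there is a `ℤ/2`-map from the sphere `S^(k+1)` to it,
built by extending over one pair of hemispheres in each dimension. The Borsuk–Ulam theorem then
gives `n - 1 ≥ k + 2`.

For the Borsuk–Ulam theorem, the signs of the coordinates of an odd map `Sⁿ → ℝᵐ`, `m ≤ n`, are odd
functions to `ℤ/2` (after breaking ties). The cup product of the coboundaries of `n` odd functions
takes the value `1` on a hemisphere. If the map has no zero, this cup product vanishes on every
sufficiently small simplex, as some coordinate has constant sign there.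
-/

section Chains

variable {V W M : Type*} [AddCommGroup M] [Module (ZMod 2) M]

/-- Augmented ordered simplicial chains modulo 2 on the full simplex with vertex set `V`: a list of
length `n + 1` is an `n`-simplex, possibly degenerate, and `[]` is the generator in degree `-1`. -/
abbrev Chain (V : Type*) := List V →₀ ZMod 2

namespace Chain

lemma hom_ext {F G : Chain V →ₗ[ZMod 2] M}
    (h : ∀ l, F (Finsupp.single l 1) = G (Finsupp.single l 1)) : F = G :=
  Finsupp.lhom_ext' fun l => LinearMap.ext_ring (h l)

lemma map_mem_of_mem_supported {F : Chain V →ₗ[ZMod 2] M} {S : Set (List V)}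
    {p : Submodule (ZMod 2) M} (hF : ∀ l ∈ S, F (Finsupp.single l 1) ∈ p) {c : Chain V}
    (hc : c ∈ Finsupp.supported (ZMod 2) (ZMod 2) S) : F c ∈ p := by
  suffices h : Finsupp.supported (ZMod 2) (ZMod 2) S ≤ p.comap F from h hc
  rw [Finsupp.supported_eq_span_single, Submodule.span_le]
  rintro _ ⟨l, hl, rfl⟩
  exact hF l hl

/-- The cone operator, adding `v` as the first vertex of every simplex. -/
def cone (v : V) : Chain V →ₗ[ZMod 2] Chain V :=
  Finsupp.lmapDomain (ZMod 2) (ZMod 2) (List.cons v)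

/-- The chain map induced by a map of vertices. -/
def push (f : V → W) : Chain V →ₗ[ZMod 2] Chain W :=
  Finsupp.lmapDomain (ZMod 2) (ZMod 2) (List.map f)

/-- The linear extension of a cochain. -/
def eval (φ : List V → ZMod 2) : Chain V →ₗ[ZMod 2] ZMod 2 :=
  Finsupp.linearCombination (ZMod 2) φ

/-- The boundary of a simplex: the sum of the lists obtained by erasing one entry. -/
def simplexBoundary : List V → Chain V
  | [] => 0
  | v :: l => Finsupp.single l 1 + cone v (simplexBoundary l)

/-- The boundary operator. -/
def boundary : Chain V →ₗ[ZMod 2] Chain V :=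
  Finsupp.linearCombination (ZMod 2) simplexBoundary

/-- The prism over `[v₀, …, vₙ]`: the sum over `i` of the simplices
`[f v₀, …, f vᵢ, g vᵢ, …, g vₙ]`. -/
def simplexPrism (f g : V → W) : List V → Chain W
  | [] => 0
  | v :: l => Finsupp.single (f v :: g v :: l.map g) 1 + cone (f v) (simplexPrism f g l)

/-- The prism operator, a chain homotopy between `push f` and `push g`. -/
def prism (f g : V → W) : Chain V →ₗ[ZMod 2] Chain W :=
  Finsupp.linearCombination (ZMod 2) (simplexPrism f g)

@[simp] lemma cone_single (v : V) (l : List V) :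
    cone v (Finsupp.single l 1) = Finsupp.single (v :: l) 1 := by simp [cone]

@[simp] lemma push_single (f : V → W) (l : List V) :
    push f (Finsupp.single l 1) = Finsupp.single (l.map f) 1 := by simp [push]

@[simp] lemma eval_single (φ : List V → ZMod 2) (l : List V) :
    eval φ (Finsupp.single l 1) = φ l := by simp [eval]

@[simp] lemma boundary_single (l : List V) :
    boundary (Finsupp.single l 1) = simplexBoundary l := by simp [boundary]

@[simp] lemma prism_single (f g : V → W) (l : List V) :
    prism f g (Finsupp.single l 1) = simplexPrism f g l := by simp [prism]

lemma push_id (c : Chain V) : push id c = c := by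
  simp [push]

lemma push_push {U : Type*} (f : V → W) (g : U → V) (c : Chain U) :
    push f (push g c) = push (f ∘ g) c := by
  suffices h : push f ∘ₗ push g = push (f ∘ g) from LinearMap.congr_fun h c
  exact hom_ext fun l => by simp

lemma push_add_push_of_involutive {ν : V → V} (hν : Function.Involutive ν) (c : Chain V) :
    push ν (c + push ν c) = c + push ν c := by
  rw [map_add, push_push, hν.comp_self, push_id, add_comm]

lemma push_const_add_push (ν : V → V) (w : W) (c : Chain V) :
    push (fun _ => w) (c + push ν c) = 0 := by
  rw [map_add, push_push]
  exact ZModModule.add_self _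

lemma push_cone (f : V → W) (v : V) (c : Chain V) :
    push f (cone v c) = cone (f v) (push f c) := by
  suffices h : push f ∘ₗ cone v = cone (f v) ∘ₗ push f from LinearMap.congr_fun h c
  exact hom_ext fun l => by simp

lemma boundary_cone (v : V) (c : Chain V) : boundary (cone v c) = c + cone v (boundary c) := by
  suffices h : boundary ∘ₗ cone v = LinearMap.id + cone v ∘ₗ boundary from LinearMap.congr_fun h c
  exact hom_ext fun l => by simp [simplexBoundary]

lemma prism_cone (f g : V → W) (v : V) (c : Chain V) :
    prism f g (cone v c) = cone (f v) (cone (g v) (push g c)) + cone (f v) (prism f g c) := by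
  suffices h : prism f g ∘ₗ cone v = cone (f v) ∘ₗ cone (g v) ∘ₗ push g + cone (f v) ∘ₗ prism f g
    from LinearMap.congr_fun h c
  exact hom_ext fun l => by simp [simplexPrism]

lemma simplexBoundary_map (f : V → W) (l : List V) :
    simplexBoundary (l.map f) = push f (simplexBoundary l) := by
  induction l with
  | nil => simp [simplexBoundary]
  | cons v l ih => simp [simplexBoundary, ih, push_cone]

lemma boundary_push (f : V → W) (c : Chain V) : boundary (push f c) = push f (boundary c) := by
  suffices h : boundary ∘ₗ push f = push f ∘ₗ boundary from LinearMap.congr_fun h c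
  exact hom_ext fun l => by simp [simplexBoundary_map]

lemma boundary_simplexPrism (f g : V → W) (l : List V) :
    boundary (simplexPrism f g l) + prism f g (simplexBoundary l) =
      Finsupp.single (l.map f) 1 + Finsupp.single (l.map g) 1 := by
  induction l with
  | nil => simp [simplexPrism, simplexBoundary, ZModModule.add_self]
  | cons v l ih =>
    have hcone := congrArg (cone (f v)) ih
    simp only [map_add, cone_single] at hcone
    simp only [simplexPrism, simplexBoundary, map_add, boundary_single, prism_single, boundary_cone,
      prism_cone, cone_single, List.map_cons, simplexBoundary_map]
    linear_combination (norm := module) hcone + ZModModule.add_self (simplexPrism f g l) +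
      ZModModule.add_self (cone (f v) (cone (g v) (push g (simplexBoundary l)))) +
      ZModModule.add_self (Finsupp.single (f v :: List.map g l) (1 : ZMod 2))

lemma boundary_prism (f g : V → W) (c : Chain V) :
    boundary (prism f g c) + prism f g (boundary c) = push f c + push g c := by
  suffices h : boundary ∘ₗ prism f g + prism f g ∘ₗ boundary = push f + push g
    from LinearMap.congr_fun h c
  exact hom_ext fun l => by simp [boundary_simplexPrism]

lemma boundary_sum_prism (f : ℕ → V → W) (N : ℕ) {z : Chain V} (hz : boundary z = 0) :
    boundary (∑ i ∈ range N, prism (f i) (f (i + 1)) z) = push (f 0) z + push (f N) z := by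
  induction N with
  | zero => simp [ZModModule.add_self]
  | succ N ih =>
    have hN := boundary_prism (f N) (f (N + 1)) z
    rw [hz, map_zero, add_zero] at hN
    rw [sum_range_succ, map_add, ih, hN]
    linear_combination (norm := module) ZModModule.add_self (push (f N) z)

lemma simplexPrism_mem_supported (f g : V → W) (l : List V) :
    simplexPrism f g l ∈ Finsupp.supported (ZMod 2) (ZMod 2)
      {l' | l'.length = l.length + 1 ∧ ∀ x ∈ l', ∃ v ∈ l, x = f v ∨ x = g v} := by
  induction l with
  | nil => simp [simplexPrism]
  | cons v l ih =>
    refine Submodule.add_mem _ (Finsupp.single_mem_supported _ _ ?_)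
      (map_mem_of_mem_supported (fun l' hl' => ?_) ih)
    · refine ⟨by simp, fun x hx => ?_⟩
      simp only [List.mem_cons, List.mem_map] at hx
      grind
    · rw [cone_single]
      refine Finsupp.single_mem_supported _ _ ⟨by simp [hl'.1], fun x hx => ?_⟩
      have := hl'.2
      grind

end Chain

/-- The cup product `δs₀ ⌣ ⋯ ⌣ δsₙ₋₁` on `n`-simplices, where `(δs) [u, v] = s u + s v`. If the `sᵢ`
are odd, each `δsᵢ` descends to the antipodal quotient, where it represents the generator of
`H¹(ℝP^∞; ℤ/2)`. -/
def cupProduct (s : ℕ → V → ZMod 2) : List V → ZMod 2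
  | [] => 0
  | [_] => 1
  | u :: v :: l => (s 0 u + s 0 v) * cupProduct (fun i => s (i + 1)) (v :: l)

/-- The cochain `δs₀ ⌣ ⋯ ⌣ δsₙ₋₁ ⌣ sₙ` on `n`-simplices, a primitive of `cupProduct s`; the value
`1` in degree `-1` makes this hold on vertices too. -/
def cupPrimitive (s : ℕ → V → ZMod 2) : List V → ZMod 2
  | [] => 1
  | [v] => s 0 v
  | u :: v :: l => (s 0 u + s 0 v) * cupPrimitive (fun i => s (i + 1)) (v :: l)

lemma eval_cupPrimitive_cone_cone (s : ℕ → V → ZMod 2) (u v : V) (c : Chain V) :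
    Chain.eval (cupPrimitive s) (Chain.cone u (Chain.cone v c)) =
      (s 0 u + s 0 v) * Chain.eval (cupPrimitive fun i => s (i + 1)) (Chain.cone v c) := by
  suffices h : Chain.eval (cupPrimitive s) ∘ₗ Chain.cone u ∘ₗ Chain.cone v =
      (s 0 u + s 0 v) • (Chain.eval (cupPrimitive fun i => s (i + 1)) ∘ₗ Chain.cone v)
    from LinearMap.congr_fun h c
  exact Chain.hom_ext fun l => by simp [cupPrimitive]

lemma eval_cupPrimitive_simplexBoundary (s : ℕ → V → ZMod 2) (l : List V) :
    Chain.eval (cupPrimitive s) (Chain.simplexBoundary l) = cupProduct s l := by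
  induction l generalizing s with
  | nil => simp [Chain.simplexBoundary, cupProduct]
  | cons u l ih =>
    rcases l with _ | ⟨v, _ | ⟨w, l⟩⟩
    · simp [Chain.simplexBoundary, cupPrimitive, cupProduct]
    · simp [Chain.simplexBoundary, cupPrimitive, cupProduct, add_comm]
    · have hs := ih fun i => s (i + 1)
      simp only [Chain.simplexBoundary, map_add, Chain.cone_single, Chain.eval_single,
        eval_cupPrimitive_cone_cone, cupPrimitive, cupProduct] at hs ⊢
      linear_combination (s 0 u + s 0 v) * hs +
        ZModModule.add_self (s 0 w * cupPrimitive (fun i => s (i + 1)) (w :: l))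

lemma eval_cupPrimitive_boundary (s : ℕ → V → ZMod 2) (c : Chain V) :
    Chain.eval (cupPrimitive s) (Chain.boundary c) = Chain.eval (cupProduct s) c := by
  suffices h : Chain.eval (cupPrimitive s) ∘ₗ Chain.boundary = Chain.eval (cupProduct s)
    from LinearMap.congr_fun h c
  exact Chain.hom_ext fun l => by simp [eval_cupPrimitive_simplexBoundary]

lemma cupPrimitive_add_cupPrimitive_map {s : ℕ → V → ZMod 2} {ν : V → V}
    (hs : ∀ i v, s i (ν v) = s i v + 1) (l : List V) :
    cupPrimitive s l + cupPrimitive s (l.map ν) = cupProduct s l := by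
  induction l generalizing s with
  | nil => simp [cupPrimitive, cupProduct, CharTwo.add_self_eq_zero]
  | cons u l ih =>
    rcases l with _ | ⟨v, l⟩
    · simp [cupPrimitive, cupProduct, hs, ← add_assoc, CharTwo.add_self_eq_zero]
    · have ih' := ih fun i => hs (i + 1)
      simp only [List.map_cons] at ih'
      simp only [cupPrimitive, cupProduct, List.map_cons, hs, ← ih']
      linear_combination cupPrimitive (fun i => s (i + 1)) (ν v :: l.map ν) *
        CharTwo.add_self_eq_zero (1 : ZMod 2)

lemma eval_cupPrimitive_add_push {s : ℕ → V → ZMod 2} {ν : V → V}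
    (hs : ∀ i v, s i (ν v) = s i v + 1) (c : Chain V) :
    Chain.eval (cupPrimitive s) (c + Chain.push ν c) = Chain.eval (cupProduct s) c := by
  suffices h : Chain.eval (cupPrimitive s) ∘ₗ (LinearMap.id + Chain.push ν) =
      Chain.eval (cupProduct s) from LinearMap.congr_fun h c
  exact Chain.hom_ext fun l => by simp [cupPrimitive_add_cupPrimitive_map hs]

lemma cupProduct_map (s : ℕ → W → ZMod 2) (f : V → W) (l : List V) :
    cupProduct s (l.map f) = cupProduct (fun i => s i ∘ f) l := by
  induction l generalizing s with
  | nil => rfl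
  | cons u l ih =>
    rcases l with _ | ⟨v, l⟩
    · rfl
    · have ih' := ih fun i => s (i + 1)
      simp only [List.map_cons] at ih'
      simp only [List.map_cons, cupProduct, ih', Function.comp_apply]

lemma eval_cupProduct_push (s : ℕ → W → ZMod 2) (f : V → W) (c : Chain V) :
    Chain.eval (cupProduct s) (Chain.push f c) = Chain.eval (cupProduct fun i => s i ∘ f) c := by
  suffices h : Chain.eval (cupProduct s) ∘ₗ Chain.push f =
      Chain.eval (cupProduct fun i => s i ∘ f) from LinearMap.congr_fun h c
  exact Chain.hom_ext fun l => by simp [cupProduct_map]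

lemma cupProduct_eq_zero {s : ℕ → V → ZMod 2} {j : ℕ} {l : List V} (hj : j + 1 < l.length)
    (hl : ∀ u ∈ l, ∀ v ∈ l, s j u = s j v) : cupProduct s l = 0 := by
  induction l generalizing s j with
  | nil => rfl
  | cons u l ih =>
    rcases l with _ | ⟨v, l⟩
    · simp at hj
    rcases j with _ | j
    · rw [cupProduct, hl u (by simp) v (by simp), CharTwo.add_self_eq_zero, zero_mul]
    · rw [cupProduct, ih (s := fun i => s (i + 1)) (j := j) (by simpa using hj)
        fun x hx y hy => hl x (by simp [hx]) y (by simp [hy]), mul_zero]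

end Chains

section BorsukUlam

open Metric Module

/-- The ordered `n`-simplices with vertices in `X`, pairwise at distance less than `ε`. -/
def smallSimplices (X : Type*) [PseudoMetricSpace X] (n : ℕ) (ε : ℝ) : Set (List X) :=
  {l | l.length = n + 1 ∧ ∀ x ∈ l, ∀ y ∈ l, dist x y < ε}

lemma push_mem_supported_smallSimplices {X Y : Type*} [PseudoMetricSpace X] [PseudoMetricSpace Y]
    {f : X → Y} {n : ℕ} {δ ε : ℝ} (hf : ∀ x y, dist x y < δ → dist (f x) (f y) < ε) {c : Chain X}
    (hc : c ∈ Finsupp.supported (ZMod 2) (ZMod 2) (smallSimplices X n δ)) :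
    Chain.push f c ∈ Finsupp.supported (ZMod 2) (ZMod 2) (smallSimplices Y n ε) := by
  refine Chain.map_mem_of_mem_supported (fun l hl => ?_) hc
  rw [Chain.push_single]
  refine Finsupp.single_mem_supported _ _ ⟨by simp [hl.1], fun x hx y hy => ?_⟩
  obtain ⟨u, hu, rfl⟩ := List.mem_map.1 hx
  obtain ⟨v, hv, rfl⟩ := List.mem_map.1 hy
  exact hf u v (hl.2 u hu v hv)

lemma prism_mem_supported_smallSimplices {X Y : Type*} [PseudoMetricSpace X] [PseudoMetricSpace Y]
    {f g : X → Y} {n : ℕ} {δ ε : ℝ} (hff : ∀ x y, dist x y < δ → dist (f x) (f y) < ε)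
    (hfg : ∀ x y, dist x y < δ → dist (f x) (g y) < ε)
    (hgg : ∀ x y, dist x y < δ → dist (g x) (g y) < ε) {c : Chain X}
    (hc : c ∈ Finsupp.supported (ZMod 2) (ZMod 2) (smallSimplices X n δ)) :
    Chain.prism f g c ∈ Finsupp.supported (ZMod 2) (ZMod 2) (smallSimplices Y (n + 1) ε) := by
  refine Chain.map_mem_of_mem_supported (fun l hl => ?_) hc
  rw [Chain.prism_single]
  refine Finsupp.supported_mono ?_ (Chain.simplexPrism_mem_supported f g l)
  rintro l' ⟨hlength, hvertex⟩
  refine ⟨by rw [hlength, hl.1], fun x hx y hy => ?_⟩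
  obtain ⟨u, hu, hxu⟩ := hvertex x hx
  obtain ⟨v, hv, hyv⟩ := hvertex y hy
  have huv := hl.2 u hu v hv
  rcases hxu with rfl | rfl <;> rcases hyv with rfl | rfl
  · exact hff u v huv
  · exact hfg u v huv
  · rw [dist_comm]
    exact hfg v u (by rwa [dist_comm])
  · exact hgg u v huv

section Meridian

variable {E : Type*} [NormedAddCommGroup E] [InnerProductSpace ℝ E]

/-- The point at angle `θ` on the quarter circle from the point `x` of the equator to the pole
`e`. -/
def meridian (e : sphere (0 : E) 1) (θ : ℝ) (x : sphere (0 : (ℝ ∙ (e : E))ᗮ) 1) :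
    sphere (0 : E) 1 :=
  ⟨Real.cos θ • ((x : (ℝ ∙ (e : E))ᗮ) : E) + Real.sin θ • (e : E), by
    have hx : ‖((x : (ℝ ∙ (e : E))ᗮ) : E)‖ = 1 := norm_eq_of_mem_sphere x
    have hinner : inner ℝ ((x : (ℝ ∙ (e : E))ᗮ) : E) (e : E) = 0 :=
      Submodule.mem_orthogonal_singleton_iff_inner_left.1 x.1.2
    rw [mem_sphere_zero_iff_norm, ← sq_eq_sq₀ (norm_nonneg _) zero_le_one, norm_add_sq_real]
    simp [norm_smul, inner_smul_left, inner_smul_right, hx, hinner]⟩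

lemma meridian_zero_neg (e : sphere (0 : E) 1) (x : sphere (0 : (ℝ ∙ (e : E))ᗮ) 1) :
    meridian e 0 (-x) = -meridian e 0 x :=
  Subtype.ext (by simp [meridian])

lemma meridian_pi_div_two (e : sphere (0 : E) 1) (x : sphere (0 : (ℝ ∙ (e : E))ᗮ) 1) :
    meridian e (Real.pi / 2) x = e :=
  Subtype.ext (by simp [meridian])

lemma dist_meridian_le (e : sphere (0 : E) 1) (s t : ℝ) (x y : sphere (0 : (ℝ ∙ (e : E))ᗮ) 1) :
    dist (meridian e s x) (meridian e t y) ≤ dist x y + 2 * |s - t| := by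
  have hy : ‖((y : (ℝ ∙ (e : E))ᗮ) : E)‖ = 1 := norm_eq_of_mem_sphere y
  calc dist (meridian e s x) (meridian e t y)
      = ‖Real.cos s • ((x : (ℝ ∙ (e : E))ᗮ) - (y : (ℝ ∙ (e : E))ᗮ) : E) +
          (Real.cos s - Real.cos t) • ((y : (ℝ ∙ (e : E))ᗮ) : E) +
          (Real.sin s - Real.sin t) • (e : E)‖ := by
        rw [Subtype.dist_eq, dist_eq_norm]
        congr 1
        simp only [meridian]
        module
    _ ≤ |Real.cos s| * dist x y + |Real.cos s - Real.cos t| + |Real.sin s - Real.sin t| := by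
        refine (norm_add₃_le).trans_eq ?_
        rw [norm_smul, norm_smul, norm_smul, hy, norm_eq_of_mem_sphere e, mul_one, mul_one,
          Subtype.dist_eq, Subtype.dist_eq, dist_eq_norm]
        rfl
    _ ≤ 1 * dist x y + |s - t| + |s - t| := by
        exact add_le_add (add_le_add
          (mul_le_mul_of_nonneg_right (Real.abs_cos_le_one s) dist_nonneg)
          (Real.abs_cos_sub_cos_le s t)) (Real.abs_sin_sub_sin_le s t)
    _ = dist x y + 2 * |s - t| := by ring

lemma exists_meridian_subdivision (e : sphere (0 : E) 1) {ε : ℝ} (hε : 0 < ε) :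
    ∃ N : ℕ, 0 < N ∧ ∀ i j : ℕ, |(i : ℝ) - j| ≤ 1 → ∀ x y, dist x y < ε / 2 →
      dist (meridian e (i * (Real.pi / 2 / N)) x) (meridian e (j * (Real.pi / 2 / N)) y) < ε := by
  obtain ⟨N, hN⟩ := exists_nat_gt (Real.pi / (ε / 2))
  have hNpos : (0 : ℝ) < N := lt_trans (by positivity) hN
  have hstep : Real.pi / N < ε / 2 := (div_lt_comm₀ (half_pos hε) hNpos).1 hN
  refine ⟨N, Nat.cast_pos.1 hNpos, fun i j hij x y hxy => ?_⟩
  calc dist (meridian e (i * (Real.pi / 2 / N)) x) (meridian e (j * (Real.pi / 2 / N)) y)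
      ≤ dist x y + 2 * |i * (Real.pi / 2 / N) - j * (Real.pi / 2 / N)| :=
        dist_meridian_le e _ _ x y
    _ = dist x y + |(i : ℝ) - j| * (Real.pi / N) := by
        rw [← sub_mul, abs_mul, abs_of_pos (by positivity : 0 < Real.pi / 2 / N)]
        ring
    _ < ε / 2 + 1 * (ε / 2) :=
        add_lt_add_of_lt_of_le hxy (mul_le_mul hij hstep.le (by positivity) zero_le_one)
    _ = ε := by ring

end Meridian

lemma exists_antipodal_chain_of_finrank_eq_one {E : Type*} [NormedAddCommGroup E]
    [InnerProductSpace ℝ E] (hE : finrank ℝ E = 1) {ε : ℝ} (hε : 0 < ε) :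
    ∃ h ∈ Finsupp.supported (ZMod 2) (ZMod 2) (smallSimplices (sphere (0 : E) 1) 0 ε),
      Chain.boundary (h + Chain.push Neg.neg h) = 0 ∧
      ∀ s : ℕ → sphere (0 : E) 1 → ZMod 2, Chain.eval (cupProduct s) h = 1 := by
  have : Nontrivial E := nontrivial_of_finrank_pos (R := ℝ) (by lia)
  obtain ⟨e, he⟩ := (NormedSpace.sphere_nonempty (x := (0 : E))).2 zero_le_one
  refine ⟨Finsupp.single [⟨e, he⟩] 1, Finsupp.single_mem_supported _ _ ⟨rfl, by simp [hε]⟩,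
    ?_, by simp [cupProduct]⟩
  simp [Chain.simplexBoundary, ZModModule.add_self]

section Suspension

variable {V W : Type*} {ν : V → V} {μ : W → W} {f : ℕ → V → W} {N : ℕ} {w : W} {h : Chain V}

lemma boundary_sum_prism_of_const (hzero : f 0 ∘ ν = μ ∘ f 0) (hN : f N = fun _ => w)
    (hboundary : Chain.boundary (h + Chain.push ν h) = 0) :
    Chain.boundary (∑ i ∈ range N, Chain.prism (f i) (f (i + 1)) (h + Chain.push ν h)) =
      Chain.push (f 0) h + Chain.push μ (Chain.push (f 0) h) := by
  rw [Chain.boundary_sum_prism f N hboundary, hN, Chain.push_const_add_push, add_zero, map_add,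
    Chain.push_push, Chain.push_push, hzero]

lemma boundary_add_push_eq_zero (hμ : Function.Involutive μ) {b c : Chain W}
    (hb : Chain.boundary c = b + Chain.push μ b) :
    Chain.boundary (c + Chain.push μ c) = 0 := by
  rw [map_add, Chain.boundary_push, hb, Chain.push_add_push_of_involutive hμ]
  exact ZModModule.add_self _

lemma eval_cupProduct_of_boundary_eq {s : ℕ → W → ZMod 2} (hs : ∀ i x, s i (μ x) = s i x + 1)
    {b c : Chain W} (hb : Chain.boundary c = b + Chain.push μ b) :
    Chain.eval (cupProduct s) c = Chain.eval (cupProduct s) b := by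
  rw [← eval_cupPrimitive_boundary, hb, eval_cupPrimitive_add_push hs]

end Suspension

/-- The chain `h` represents a hemisphere, swept out by the meridians joining the fundamental cycle
of the equator in `eᗮ` to the pole `e`. -/
lemma exists_antipodal_chain.{u} (n : ℕ) {E : Type u} [NormedAddCommGroup E]
    [InnerProductSpace ℝ E] (hE : finrank ℝ E = n + 1) {ε : ℝ} (hε : 0 < ε) :
    ∃ h ∈ Finsupp.supported (ZMod 2) (ZMod 2) (smallSimplices (sphere (0 : E) 1) n ε),
      Chain.boundary (h + Chain.push Neg.neg h) = 0 ∧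
      ∀ s : ℕ → sphere (0 : E) 1 → ZMod 2, (∀ i x, s i (-x) = s i x + 1) →
        Chain.eval (cupProduct s) h = 1 := by
  induction n generalizing E ε with
  | zero =>
    obtain ⟨h, hsmall, hboundary, heval⟩ := exists_antipodal_chain_of_finrank_eq_one hE hε
    exact ⟨h, hsmall, hboundary, fun s _ => heval s⟩
  | succ n ih =>
    have : Nontrivial E := nontrivial_of_finrank_pos (R := ℝ) (by lia)
    obtain ⟨e⟩ := (NormedSpace.sphere_nonempty (x := (0 : E)).2 zero_le_one).to_subtype
    have : Fact (finrank ℝ E = n + 1 + 1) := ⟨hE⟩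
    have hne : (e : E) ≠ 0 := ne_zero_of_mem_unit_sphere e
    obtain ⟨h, hsmall, hboundary, heval⟩ :=
      ih (Submodule.finrank_orthogonal_span_singleton hne) (half_pos hε)
    set z := h + Chain.push Neg.neg h
    obtain ⟨N, hNpos, hdist⟩ := exists_meridian_subdivision e hε
    let f : ℕ → sphere (0 : (ℝ ∙ (e : E))ᗮ) 1 → sphere (0 : E) 1 :=
      fun i => meridian e (i * (Real.pi / 2 / N))
    have hfN : f N = fun _ => e := by
      funext x
      simp only [f, mul_div_cancel₀ _ (Nat.cast_ne_zero.2 hNpos.ne' : (N : ℝ) ≠ 0),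
        meridian_pi_div_two]
    have hH : Chain.boundary (∑ i ∈ range N, Chain.prism (f i) (f (i + 1)) z) =
        Chain.push (f 0) h + Chain.push Neg.neg (Chain.push (f 0) h) :=
      boundary_sum_prism_of_const (funext fun x => by simp [f, meridian_zero_neg]) hfN hboundary
    refine ⟨∑ i ∈ range N, Chain.prism (f i) (f (i + 1)) z, ?_,
      boundary_add_push_eq_zero neg_involutive hH, fun s hs => ?_⟩
    · exact Submodule.sum_mem _ fun i _ => prism_mem_supported_smallSimplices
        (hdist i i (by simp)) (hdist i (i + 1) (by simp)) (hdist (i + 1) (i + 1) (by simp)) <|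
        Submodule.add_mem _ hsmall <| push_mem_supported_smallSimplices
          (fun x y hxy => by rwa [Subtype.dist_eq, coe_neg_sphere, coe_neg_sphere, dist_neg_neg])
          hsmall
    · rw [eval_cupProduct_of_boundary_eq hs hH, eval_cupProduct_push]
      exact heval _ fun i x => by simp [f, meridian_zero_neg, hs]

/-- Ties, where `f` vanishes, are broken by a well-ordering. -/
lemma exists_odd_sign {V : Type*} [InvolutiveNeg V] (hneg : ∀ x : V, x ≠ -x) {f : V → ℝ}
    (hf : ∀ x, f (-x) = -f x) :
    ∃ s : V → ZMod 2, (∀ x, s (-x) = s x + 1) ∧ (∀ x, 0 < f x → s x = 1) ∧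
      ∀ x, f x < 0 → s x = 0 := by
  classical
  refine ⟨fun x => if 0 < f x ∨ f x = 0 ∧ WellOrderingRel (-x) x then 1 else 0,
    fun x => ?_, fun x hx => by simp [hx], fun x hx => by simp [hx.not_gt, hx.ne]⟩
  rcases lt_trichotomy (f x) 0 with h | h | h
  · simp [hf, h, h.not_gt, h.ne]
  · rcases trichotomous_of WellOrderingRel x (-x) with hx | hx | hx
    · simp [hf, h, hx, asymm hx]
    · exact absurd hx (hneg x)
    · simp [hf, h, hx, asymm hx, CharTwo.add_self_eq_zero]
  · simp [hf, h, h.not_gt, h.ne', CharTwo.add_self_eq_zero]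

lemma exists_forall_ball_pos_or_neg {X ι : Type*} [PseudoMetricSpace X] [CompactSpace X]
    {g : X → ι → ℝ} (hg : Continuous g) (hne : ∀ x, g x ≠ 0) :
    ∃ δ > 0, ∀ x, ∃ i, (∀ y ∈ ball x δ, 0 < g y i) ∨ ∀ y ∈ ball x δ, g y i < 0 := by
  have hopen (i : ι × Bool) : IsOpen {x | if i.2 then 0 < g x i.1 else g x i.1 < 0} := by
    rcases i with ⟨i, _ | _⟩
    · exact isOpen_lt ((continuous_apply i).comp hg) continuous_const
    · exact isOpen_lt continuous_const ((continuous_apply i).comp hg)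
  have hcover : Set.univ ⊆ ⋃ i : ι × Bool, {x | if i.2 then 0 < g x i.1 else g x i.1 < 0} := by
    intro x _
    obtain ⟨i, hi⟩ := Function.ne_iff.1 (hne x)
    rcases lt_or_gt_of_ne hi with h | h
    · exact Set.mem_iUnion.2 ⟨(i, false), by simpa using h⟩
    · exact Set.mem_iUnion.2 ⟨(i, true), by simpa using h⟩
  obtain ⟨δ, hδ, hball⟩ := lebesgue_number_lemma_of_metric isCompact_univ hopen hcover
  refine ⟨δ, hδ, fun x => ?_⟩
  obtain ⟨⟨i, _ | _⟩, hi⟩ := hball x (Set.mem_univ x)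
  · exact ⟨i, Or.inr fun y hy => by simpa using hi hy⟩
  · exact ⟨i, Or.inl fun y hy => by simpa using hi hy⟩

variable {E : Type*} [NormedAddCommGroup E] [InnerProductSpace ℝ E]

lemma borsuk_ulam_fun {m : ℕ} (hm : m < finrank ℝ E) {g : sphere (0 : E) 1 → Fin m → ℝ}
    (hg : Continuous g) (hodd : ∀ x, g (-x) = -g x) : ∃ x, g x = 0 := by
  by_contra! hne
  have : FiniteDimensional ℝ E := FiniteDimensional.of_finrank_pos (Nat.zero_lt_of_lt hm)
  obtain ⟨n, hn⟩ : ∃ n, finrank ℝ E = n + 1 := Nat.exists_eq_add_one.2 (by lia)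
  obtain ⟨δ, hδ, hsign⟩ := exists_forall_ball_pos_or_neg hg hne
  obtain ⟨h, hsmall, -, heval⟩ := exists_antipodal_chain n hn hδ
  choose s hsodd hspos hsneg using fun i : ℕ =>
    exists_odd_sign (ne_neg_of_mem_unit_sphere ℝ (E := E))
      (f := fun x => if hi : i < m then g x ⟨i, hi⟩ else 0) fun x => by
        split_ifs <;> simp [hodd]
  have hzero : Chain.eval (cupProduct s) h ∈ (⊥ : Submodule (ZMod 2) (ZMod 2)) := by
    refine Chain.map_mem_of_mem_supported (fun l hl => ?_) hsmall
    obtain ⟨x, hx⟩ := List.exists_mem_of_length_pos (by rw [hl.1]; exact n.succ_pos)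
    obtain ⟨i, hi⟩ := hsign x
    suffices hconst : ∃ a, ∀ y ∈ l, s i y = a by
      obtain ⟨a, ha⟩ := hconst
      rw [Chain.eval_single, Submodule.mem_bot]
      exact cupProduct_eq_zero (j := i) (by rw [hl.1]; lia) fun u hu v hv => by
        rw [ha u hu, ha v hv]
    rcases hi with hi | hi
    · exact ⟨1, fun y hy => hspos i y (by simpa using hi y (hl.2 y hy x hx))⟩
    · exact ⟨0, fun y hy => hsneg i y (by simpa using hi y (hl.2 y hy x hx))⟩
  exact one_ne_zero ((heval s hsodd).symm.trans ((Submodule.mem_bot _).1 hzero))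

theorem borsuk_ulam {F : Type*} [NormedAddCommGroup F] [NormedSpace ℝ F] [FiniteDimensional ℝ F]
    (hF : finrank ℝ F < finrank ℝ E) (g : C(sphere (0 : E) 1, F)) (hodd : ∀ x, g (-x) = -g x) :
    ∃ x, g x = 0 := by
  let e := (finBasis ℝ F).equivFunL
  obtain ⟨x, hx⟩ := borsuk_ulam_fun hF (g := e ∘ g) (by fun_prop) fun x => by simp [hodd]
  exact ⟨x, e.map_eq_zero_iff.1 hx⟩

end BorsukUlam

section Collapse

open Topology unitInterval

variable {Y K : Type*} {j : Y → K}

/-- The Pontryagin–Thom collapse of an open embedding `j`, sending the complement of the range of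
`j` to the point at infinity. -/
def collapse (j : Y → K) : K → OnePoint Y :=
  Function.extend j (↑) fun _ => OnePoint.infty

lemma collapse_apply (hj : Function.Injective j) (y : Y) : collapse j (j y) = (y : OnePoint Y) :=
  hj.extend_apply _ _ y

lemma collapse_of_notMem_range {x : K} (hx : x ∉ Set.range j) : collapse j x = OnePoint.infty :=
  Function.extend_apply' _ _ x hx

lemma collapse_surjective (hj : Function.Injective j) (hrange : Set.range j ≠ Set.univ) :
    Function.Surjective (collapse j) := by
  intro y
  induction y using OnePoint.rec with
  | infty =>
    obtain ⟨x, hx⟩ := (Set.ne_univ_iff_exists_notMem _).1 hrange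
    exact ⟨x, collapse_of_notMem_range hx⟩
  | coe y => exact ⟨j y, collapse_apply hj y⟩

lemma eq_or_notMem_range_of_collapse_eq (hj : Function.Injective j) {x x' : K}
    (h : collapse j x = collapse j x') : x = x' ∨ x ∉ Set.range j ∧ x' ∉ Set.range j := by
  by_cases hx : x ∈ Set.range j <;> by_cases hx' : x' ∈ Set.range j
  · obtain ⟨y, rfl⟩ := hx
    obtain ⟨y', rfl⟩ := hx'
    rw [collapse_apply hj, collapse_apply hj, OnePoint.coe_eq_coe] at h
    exact Or.inl (congrArg j h)
  · obtain ⟨y, rfl⟩ := hx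
    rw [collapse_apply hj, collapse_of_notMem_range hx'] at h
    exact absurd h (OnePoint.coe_ne_infty y)
  · obtain ⟨y', rfl⟩ := hx'
    rw [collapse_apply hj, collapse_of_notMem_range hx] at h
    exact absurd h (OnePoint.infty_ne_coe y')
  · exact Or.inr ⟨hx, hx'⟩

variable [TopologicalSpace Y] [TopologicalSpace K]

lemma continuous_collapse [T2Space K] (hj : IsOpenEmbedding j) : Continuous (collapse j) := by
  refine continuous_def.2 fun s hs => ?_
  obtain ⟨hcompact, hopen⟩ := OnePoint.isOpen_def.1 hs
  by_cases hinfty : OnePoint.infty ∈ s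
  · have hpreimage : (collapse j ⁻¹' s)ᶜ = j '' ((↑) ⁻¹' s : Set Y)ᶜ := by
      ext x
      by_cases hx : x ∈ Set.range j
      · obtain ⟨y, rfl⟩ := hx
        simp [collapse_apply hj.injective, hj.injective.eq_iff]
      · have : ¬∃ y, j y = x := hx
        simp only [Set.mem_compl_iff, Set.mem_preimage, collapse_of_notMem_range hx, hinfty]
        grind
    rw [← isClosed_compl_iff, hpreimage]
    exact ((hcompact hinfty).image hj.continuous).isClosed
  · have hpreimage : collapse j ⁻¹' s = j '' ((↑) ⁻¹' s) := by
      ext x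
      by_cases hx : x ∈ Set.range j
      · obtain ⟨y, rfl⟩ := hx
        simp [collapse_apply hj.injective, hj.injective.eq_iff]
      · have : ¬∃ y, j y = x := hx
        simp only [Set.mem_preimage, collapse_of_notMem_range hx, hinfty]
        grind
    rw [hpreimage]
    exact hj.isOpenMap _ hopen

variable {N X : Type*} [TopologicalSpace X]

lemma nullhomotopic_of_subsingleton_homotopyGroup [Nonempty N] {j : Y → (N → I)}
    (hj : IsOpenEmbedding j) (hrange : Set.range j = (Cube.boundary N)ᶜ)
    (hX : ∀ x : X, Subsingleton (HomotopyGroup N X x)) (ψ : C(OnePoint Y, X)) :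
    ψ.Nullhomotopic := by
  have : T2Space Y := hj.isEmbedding.t2Space
  have : LocallyCompactSpace Y := hj.locallyCompactSpace
  have hboundary (x : N → I) : x ∉ Set.range j ↔ x ∈ Cube.boundary N := by simp [hrange]
  have hsurjective : Function.Surjective (collapse j) := by
    refine collapse_surjective hj.injective ?_
    rw [hrange, Ne, Set.compl_univ_iff]
    exact Set.Nonempty.ne_empty ⟨0, Classical.arbitrary N, Or.inl rfl⟩
  let q : C(I × (N → I), I × OnePoint Y) :=
    (ContinuousMap.id I).prodMap ⟨collapse j, continuous_collapse hj⟩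
  have hq : IsQuotientMap q := q.continuous.isClosedMap.isQuotientMap q.continuous
    (Function.surjective_id.prodMap hsurjective)
  let γ : GenLoop N X (ψ OnePoint.infty) := ⟨ψ.comp ⟨collapse j, continuous_collapse hj⟩,
    fun x hx => congrArg ψ (collapse_of_notMem_range ((hboundary x).2 hx))⟩
  obtain ⟨H⟩ : GenLoop.Homotopic γ GenLoop.const :=
    Quotient.exact ((hX _).elim (Quotient.mk _ γ) (Quotient.mk _ GenLoop.const))
  have hH : Function.FactorsThrough H.toContinuousMap q := by
    rintro ⟨t, x⟩ ⟨t', x'⟩ hxx'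
    obtain ⟨rfl, hcollapse⟩ := Prod.ext_iff.1 hxx'
    rcases eq_or_notMem_range_of_collapse_eq hj.injective hcollapse with rfl | ⟨hx, hx'⟩
    · rfl
    · exact (H.eq_fst t ((hboundary x).1 hx)).trans <|
        (congrArg ψ hcollapse).trans (H.eq_fst t ((hboundary x').1 hx')).symm
  have hlift (t : I) (x : N → I) : hq.lift H.toContinuousMap hH (t, collapse j x) = H (t, x) :=
    congrArg (· (t, x)) (hq.lift_comp H.toContinuousMap hH)
  refine ⟨ψ OnePoint.infty, ⟨⟨hq.lift H.toContinuousMap hH, fun y => ?_, fun y => ?_⟩⟩⟩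
  · obtain ⟨x, rfl⟩ := hsurjective y
    exact (hlift 0 x).trans (H.apply_zero x)
  · obtain ⟨x, rfl⟩ := hsurjective y
    exact (hlift 1 x).trans (H.apply_one x)

end Collapse

section KConnected

open Metric Module Topology unitInterval

section Sphere

variable {E : Type*} [NormedAddCommGroup E] [NormedSpace ℝ E] [FiniteDimensional ℝ E]
  {X : Type*} [TopologicalSpace X]

lemma exists_isOpenEmbedding_cube (E : Type*) [NormedAddCommGroup E] [NormedSpace ℝ E]
    [FiniteDimensional ℝ E] : ∃ j : E → (Fin (finrank ℝ E) → I),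
      IsOpenEmbedding j ∧ Set.range j = (Cube.boundary (Fin (finrank ℝ E)))ᶜ := by
  have hsigmoid : IsOpenEmbedding unitInterval.sigmoid :=
    ⟨isEmbedding_sigmoid, by rw [range_sigmoid]; exact isOpen_Ioo⟩
  refine ⟨Pi.map (fun _ => unitInterval.sigmoid) ∘ (finBasis ℝ E).equivFunL,
    (IsOpenEmbedding.piMap fun _ => hsigmoid).comp
      (finBasis ℝ E).equivFunL.toHomeomorph.isOpenEmbedding, ?_⟩
  rw [(finBasis ℝ E).equivFunL.surjective.range_comp, Set.range_piMap]
  ext x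
  simp only [range_sigmoid, Set.mem_univ_pi, Set.mem_Ioo, Cube.boundary, Set.mem_compl_iff,
    Set.mem_ofPred_eq, not_exists, not_or, unitInterval.pos_iff_ne_zero,
    unitInterval.lt_one_iff_ne_one]

lemma nullhomotopic_of_discreteTopology {Y : Type*} [TopologicalSpace Y] [DiscreteTopology Y]
    [PathConnectedSpace X] (ψ : C(Y, X)) : ψ.Nullhomotopic := by
  obtain ⟨x⟩ := PathConnectedSpace.nonempty (X := X)
  let γ (y : Y) : Path (ψ y) x := PathConnectedSpace.somePath _ _
  exact ⟨x, ⟨⟨⟨fun p => γ p.2 p.1, continuous_prod_of_discrete_right.2 fun y => (γ y).continuous⟩,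
    fun y => (γ y).source, fun y => (γ y).target⟩⟩⟩

lemma nullhomotopic_of_isEmpty {Y : Type*} [TopologicalSpace Y] [IsEmpty Y] [Nonempty X]
    (ψ : C(Y, X)) : ψ.Nullhomotopic := by
  obtain ⟨x⟩ := ‹Nonempty X›
  rw [Subsingleton.elim ψ (ContinuousMap.const Y x)]
  exact ContinuousMap.nullhomotopic_of_constant x

lemma exists_extension_closedBall {ψ : C(sphere (0 : E) 1, X)}
    (hψ : ψ.Nullhomotopic) : ∃ Φ : C(closedBall (0 : E) 1, X),
      ∀ x, Φ (Set.inclusion sphere_subset_closedBall x) = ψ x := by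
  obtain ⟨x₀, ⟨H⟩⟩ := hψ
  rcases isEmpty_or_nonempty (sphere (0 : E) 1) with hempty | ⟨⟨e⟩⟩
  · exact ⟨ContinuousMap.const _ x₀, fun x => hempty.elim x⟩
  let q : C(I × sphere (0 : E) 1, closedBall (0 : E) 1) :=
    ⟨fun p => ⟨(p.1 : ℝ) • (p.2 : E), by
      simpa [norm_smul, abs_of_nonneg p.1.2.1] using p.1.2.2⟩, by fun_prop⟩
  have hnorm (t : I) (x : sphere (0 : E) 1) : ‖(q (t, x) : E)‖ = t := by
    simp [q, norm_smul, abs_of_nonneg t.2.1]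
  have hsurjective : Function.Surjective q := by
    intro v
    rcases eq_or_ne (v : E) 0 with hv | hv
    · exact ⟨(0, e), Subtype.ext (by simp [q, hv])⟩
    · refine ⟨(⟨‖(v : E)‖, norm_nonneg _, mem_closedBall_zero_iff.1 v.2⟩,
        ⟨‖(v : E)‖⁻¹ • (v : E), by simp [norm_smul, hv]⟩), Subtype.ext ?_⟩
      simp [q, smul_smul, hv]
  have hq : IsQuotientMap q := q.continuous.isClosedMap.isQuotientMap q.continuous hsurjective
  have hH : Function.FactorsThrough H.symm.toContinuousMap q := by
    rintro ⟨t, x⟩ ⟨t', x'⟩ h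
    obtain rfl : t = t' := Subtype.ext (by rw [← hnorm t x, h, hnorm])
    rcases eq_or_ne t 0 with rfl | ht
    · exact (H.symm.apply_zero x).trans (H.symm.apply_zero x').symm
    · obtain rfl : x = x' := Subtype.ext <| smul_right_injective E (Subtype.coe_ne_coe.2 ht) <|
        congrArg Subtype.val h
      rfl
  refine ⟨hq.lift H.symm.toContinuousMap hH, fun x => ?_⟩
  have hx : q (1, x) = Set.inclusion sphere_subset_closedBall x := Subtype.ext (one_smul ℝ _)
  rw [← hx]
  exact (congrArg (· (1, x)) (hq.lift_comp H.symm.toContinuousMap hH)).trans (H.symm.apply_one x)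

end Sphere

variable {k : ℤ} {X : Type} [TopologicalSpace X]

lemma KConnected.nullhomotopic_onePoint (hX : KConnected k X) {F : Type*} [NormedAddCommGroup F]
    [NormedSpace ℝ F] [FiniteDimensional ℝ F] (hF : finrank ℝ F ≤ k) (ψ : C(OnePoint F, X)) :
    ψ.Nullhomotopic := by
  obtain ⟨-, hpath, hpi⟩ := hX
  rcases Nat.eq_zero_or_pos (finrank ℝ F) with hzero | hpos
  · have : Subsingleton F := finrank_zero_iff.1 hzero
    have : Finite (OnePoint F) := inferInstanceAs (Finite (Option F))
    have : PathConnectedSpace X := hpath (by lia)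
    exact nullhomotopic_of_discreteTopology ψ
  · obtain ⟨j, hj, hrange⟩ := exists_isOpenEmbedding_cube F
    have : Nonempty (Fin (finrank ℝ F)) := ⟨0, hpos⟩
    exact nullhomotopic_of_subsingleton_homotopyGroup hj hrange (hpi _ hpos hF) ψ

lemma KConnected.nullhomotopic_sphere (hX : KConnected k X) {E : Type*} [NormedAddCommGroup E]
    [InnerProductSpace ℝ E] [FiniteDimensional ℝ E] (hE : finrank ℝ E ≤ k + 1)
    (ψ : C(sphere (0 : E) 1, X)) : ψ.Nullhomotopic := by
  have : Nonempty X := hX.1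
  rcases subsingleton_or_nontrivial E with hsub | hnontrivial
  · have : IsEmpty (sphere (0 : E) 1) := ⟨fun x => ne_zero_of_mem_unit_sphere x (hsub.elim _ _)⟩
    exact nullhomotopic_of_isEmpty ψ
  obtain ⟨e, he⟩ := NormedSpace.sphere_nonempty (x := (0 : E)).2 zero_le_one
  have hrank := (ℝ ∙ e).finrank_add_finrank_orthogonal
  rw [finrank_span_singleton (ne_zero_of_mem_unit_sphere ⟨e, he⟩)] at hrank
  have hF : finrank ℝ (ℝ ∙ e)ᗮ ≤ k := by lia
  let Θ := onePointHyperplaneHomeoUnitSphere (mem_sphere_zero_iff_norm.1 he)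
  have hΘ := (hX.nullhomotopic_onePoint hF (ψ.comp Θ)).comp_left
    (Θ.symm : C(sphere (0 : E) 1, OnePoint (ℝ ∙ e)ᗮ))
  rwa [ContinuousMap.comp_assoc, Homeomorph.toContinuousMap_comp_symm, ContinuousMap.comp_id] at hΘ

section Equivariant

variable {E : Type*} [NormedAddCommGroup E] [InnerProductSpace ℝ E] {X : Type*} [TopologicalSpace X]

/-- The vertical projection of the unit sphere onto the equatorial disc orthogonal to `e`. -/
def equatorialProjection (e : E) : C(sphere (0 : E) 1, closedBall (0 : (ℝ ∙ e)ᗮ) 1) where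
  toFun x := ⟨(ℝ ∙ e)ᗮ.orthogonalProjectionOnto (x : E), by
    rw [mem_closedBall_zero_iff]
    exact ((ℝ ∙ e)ᗮ.norm_orthogonalProjectionOnto_apply_le x).trans_eq (norm_eq_of_mem_sphere x)⟩
  continuous_toFun := by fun_prop

lemma equatorialProjection_neg (e : E) (x : sphere (0 : E) 1) :
    equatorialProjection e (-x) = -equatorialProjection e x :=
  Subtype.ext (by simp [equatorialProjection])

lemma exists_equatorialProjection_eq_inclusion {e : E} {x : sphere (0 : E) 1}
    (hx : inner ℝ e (x : E) = 0) :
    ∃ y, equatorialProjection e x = Set.inclusion sphere_subset_closedBall y := by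
  have hmem : (x : E) ∈ (ℝ ∙ e)ᗮ := Submodule.mem_orthogonal_singleton_iff_inner_right.2 hx
  refine ⟨⟨⟨x, hmem⟩, mem_sphere_zero_iff_norm.2 (norm_eq_of_mem_sphere x)⟩, Subtype.ext ?_⟩
  exact Submodule.orthogonalProjectionOnto_mem_subspace_eq_self ⟨(x : E), hmem⟩

/-- The extension `Φ` determines the map on the upper hemisphere, and `τ` transports it to the
lower one. -/
lemma exists_equivariant_of_extension {τ : C(X, X)} (hτ : Function.Involutive τ) {e : E}
    {ψ₀ : C(sphere (0 : (ℝ ∙ e)ᗮ) 1, X)} (hψ₀ : ∀ y, ψ₀ (-y) = τ (ψ₀ y))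
    {Φ : C(closedBall (0 : (ℝ ∙ e)ᗮ) 1, X)}
    (hΦ : ∀ y, Φ (Set.inclusion sphere_subset_closedBall y) = ψ₀ y) :
    ∃ ψ : C(sphere (0 : E) 1, X), ∀ x, ψ (-x) = τ (ψ x) := by
  let upper : C(sphere (0 : E) 1, X) := Φ.comp (equatorialProjection e)
  have hequator (x : sphere (0 : E) 1) (hx : inner ℝ e (x : E) = 0) :
      upper (-x) = τ (upper x) := by
    obtain ⟨y, hy⟩ := exists_equatorialProjection_eq_inclusion hx
    calc upper (-x) = Φ (Set.inclusion sphere_subset_closedBall (-y)) := by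
          simp only [upper, ContinuousMap.comp_apply, equatorialProjection_neg, hy]
          rfl
      _ = τ (upper x) := by
          simp only [upper, ContinuousMap.comp_apply, hy, hΦ, hψ₀]
  refine ⟨⟨fun x => if 0 ≤ inner ℝ e (x : E) then upper x else τ (upper (-x)), ?_⟩, fun x => ?_⟩
  · refine Continuous.if_le (by fun_prop) (by fun_prop) (by fun_prop) (by fun_prop) fun x hx => ?_
    rw [hequator x hx.symm, hτ]
  · rcases lt_trichotomy (inner ℝ e (x : E)) 0 with hx | hx | hx
    · simp [inner_neg_right, hx.le, hx.not_ge, hτ _]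
    · simp [inner_neg_right, hx, hequator]
    · simp [inner_neg_right, hx.le, hx.not_ge]

end Equivariant

variable {τ : C(X, X)}

theorem KConnected.exists_equivariant (hX : KConnected k X) (hτ : Function.Involutive τ)
    {E : Type*} [NormedAddCommGroup E] [InnerProductSpace ℝ E] [FiniteDimensional ℝ E]
    (hE : finrank ℝ E ≤ k + 2) : ∃ ψ : C(sphere (0 : E) 1, X), ∀ x, ψ (-x) = τ (ψ x) := by
  induction hn : finrank ℝ E generalizing E with
  | zero =>
    have : Subsingleton E := finrank_zero_iff.1 hn
    have hempty : IsEmpty (sphere (0 : E) 1) :=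
      ⟨fun x => ne_zero_of_mem_unit_sphere x (Subsingleton.elim _ _)⟩
    exact ⟨⟨hempty.elim, continuous_of_discreteTopology⟩, fun x => hempty.elim x⟩
  | succ n ih =>
    have : Nontrivial E := nontrivial_of_finrank_pos (R := ℝ) (by lia)
    have : Fact (finrank ℝ E = n + 1) := ⟨hn⟩
    obtain ⟨e, he⟩ := exists_ne (0 : E)
    have hF : finrank ℝ (ℝ ∙ e)ᗮ = n := Submodule.finrank_orthogonal_span_singleton he
    obtain ⟨ψ₀, hψ₀⟩ := ih (E := (ℝ ∙ e)ᗮ) (by lia) hF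
    obtain ⟨Φ, hΦ⟩ := exists_extension_closedBall (hX.nullhomotopic_sphere (by lia) ψ₀)
    exact exists_equivariant_of_extension hτ hψ₀ hΦ

theorem KConnected.exists_eq_zero (hX : KConnected k X) (hk : -1 ≤ k) (hτ : Function.Involutive τ)
    {F : Type*} [NormedAddCommGroup F] [NormedSpace ℝ F] [FiniteDimensional ℝ F]
    (hF : finrank ℝ F ≤ k + 1) (g : C(X, F)) (hg : ∀ x, g (τ x) = -g x) : ∃ x, g x = 0 := by
  obtain ⟨n, hn⟩ := Int.eq_ofNat_of_zero_le (by lia : 0 ≤ k + 2)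
  obtain ⟨ψ, hψ⟩ := hX.exists_equivariant hτ (E := EuclideanSpace ℝ (Fin n))
    (by rw [finrank_euclideanSpace_fin]; lia)
  obtain ⟨x, hx⟩ := borsuk_ulam (by rw [finrank_euclideanSpace_fin]; lia) (g.comp ψ)
    fun x => by simp [hψ, hg]
  exact ⟨ψ x, hx⟩

end KConnected

section Coloring

open Module

lemma nonempty_graphHom_chromaticNumber {H : Graph} (hH : H.Loopless) :
    Nonempty (GraphHom H (completeGraph (chromaticNumber H))) := by
  have hcard : Nonempty (GraphHom H (completeGraph (Fintype.card H.V))) :=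
    ⟨Fintype.equivFin H.V, fun x y hxy => (Fintype.equivFin H.V).injective.ne fun h =>
      hH y (h ▸ hxy)⟩
  exact Nat.sInf_mem (s := {n | Nonempty (GraphHom H (completeGraph n))}) ⟨_, hcard⟩

lemma completeGraph_loopless (n : ℕ) : (completeGraph n).Loopless :=
  fun _ h => h rfl

lemma continuous_homComplex_apply (G H : Graph) (v : G.V) (w : H.V) :
    Continuous fun f : HomComplex G H => f.1 v w :=
  (continuous_apply_apply v w).comp continuous_subtype_val

open Classical in
/-- The map `Hom(G, H) → Hom(G, K)` induced by `φ : H → K`; it pushes forward the probability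
distribution at every vertex of `G`. -/
def postcompHom (G : Graph) {H K : Graph} (φ : GraphHom H K) :
    C(HomComplex G H, HomComplex G K) where
  toFun f := ⟨fun v i => ∑ w with φ.1 w = i, f.1 v w, fun v _ => sum_nonneg fun w _ => f.2.1 v w,
    fun v => (sum_fiberwise univ φ.1 (f.1 v)).trans (f.2.2.1 v), fun x y hxy i j hi hj => by
      obtain ⟨a, ha, hfa⟩ := exists_ne_zero_of_sum_ne_zero hi
      obtain ⟨b, hb, hfb⟩ := exists_ne_zero_of_sum_ne_zero hj
      rw [← (mem_filter.1 ha).2, ← (mem_filter.1 hb).2]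
      exact φ.2 a b (f.2.2.2 x y hxy a b hfa hfb)⟩
  continuous_toFun := .subtype_mk (continuous_pi fun v => continuous_pi fun _ =>
    continuous_finsetSum _ fun w _ => continuous_homComplex_apply G H v w) _

/-- The involution of `K₂` exchanging its two vertices. -/
def swapHom : GraphHom (completeGraph 2) (completeGraph 2) :=
  ⟨Fin.rev, fun _ _ h => Fin.rev_injective.ne h⟩

lemma precompHom_swapHom_involutive (H : Graph) : Function.Involutive (precompHom swapHom H) :=
  precompHom_invol swapHom Fin.rev_rev H

/-- The hyperplane of `ℝ^ι` on which the sum of the coordinates vanishes. -/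
def sumZeroHyperplane (ι : Type*) [Fintype ι] : Submodule ℝ (ι → ℝ) :=
  LinearMap.ker (∑ i, LinearMap.proj i)

lemma mem_sumZeroHyperplane {ι : Type*} [Fintype ι] {x : ι → ℝ} :
    x ∈ sumZeroHyperplane ι ↔ ∑ i, x i = 0 := by
  simp [sumZeroHyperplane]

lemma finrank_sumZeroHyperplane_add_one (ι : Type*) [Fintype ι] [Nonempty ι] :
    finrank ℝ (sumZeroHyperplane ι) + 1 = Fintype.card ι := by
  have hne : (∑ i, LinearMap.proj i : Dual ℝ (ι → ℝ)) ≠ 0 := fun h => by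
    simpa using LinearMap.congr_fun h 1
  rw [← finrank_fintype_fun_eq_card ℝ]
  exact Dual.finrank_ker_add_one_of_ne_zero hne

/-- The `ℤ/2`-map `f ↦ f 0 - f 1` from `Hom(K₂, H)` to the sum-zero hyperplane, on which `ℤ/2` acts
by negation. -/
def vertexDifference (H : Graph) :
    C(HomComplex (completeGraph 2) H, sumZeroHyperplane H.V) where
  toFun f := ⟨f.1 (0 : Fin 2) - f.1 (1 : Fin 2), mem_sumZeroHyperplane.2 <| by
    simp only [Pi.sub_apply, sum_sub_distrib, f.2.2.1, sub_self]⟩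
  continuous_toFun := .subtype_mk (continuous_pi fun w =>
    (continuous_homComplex_apply (completeGraph 2) H (0 : Fin 2) w).sub
      (continuous_homComplex_apply (completeGraph 2) H (1 : Fin 2) w)) _

lemma vertexDifference_swapHom (H : Graph) (f : HomComplex (completeGraph 2) H) :
    vertexDifference H (precompHom swapHom H f) = -vertexDifference H f :=
  Subtype.ext (neg_sub _ _).symm

/-- The two distributions have disjoint supports. -/
lemma vertexDifference_ne_zero {H : Graph} (hH : H.Loopless)
    (f : HomComplex (completeGraph 2) H) : vertexDifference H f ≠ 0 := by
  intro hzero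
  have heq : f.1 (0 : Fin 2) = f.1 (1 : Fin 2) := sub_eq_zero.1 (congrArg Subtype.val hzero)
  obtain ⟨w, -, hw⟩ := exists_ne_zero_of_sum_ne_zero
    ((f.2.2.1 (0 : Fin 2)).trans_ne one_ne_zero)
  exact hH w (f.2.2.2 (0 : Fin 2) (1 : Fin 2) zero_ne_one w w hw (heq ▸ hw))

lemma KConnected.add_three_le_of_graphHom {H : Graph} {k : ℤ} (hk : -1 ≤ k)
    (hconn : KConnected k (HomComplex (completeGraph 2) H)) {n : ℕ}
    (φ : GraphHom H (completeGraph n)) : k + 3 ≤ n := by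
  by_contra! hlt
  let g := (vertexDifference (completeGraph n)).comp (postcompHom (completeGraph 2) φ)
  have hne (f) : g f ≠ 0 := vertexDifference_ne_zero (completeGraph_loopless n) _
  have hodd (f) : g (precompHom swapHom H f) = -g f :=
    vertexDifference_swapHom _ (postcompHom (completeGraph 2) φ f)
  obtain ⟨f₀⟩ := hconn.1
  rcases Nat.eq_zero_or_pos n with rfl | hn
  · exact hne f₀ (Subsingleton.elim _ _)
  have : Nonempty (Fin n) := ⟨0, hn⟩
  have hrank := finrank_sumZeroHyperplane_add_one (Fin n)
  rw [Fintype.card_fin] at hrank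
  obtain ⟨f, hf⟩ := hconn.exists_eq_zero hk (precompHom_swapHom_involutive H) (by lia) g hodd
  exact hne f hf

end Coloring

/-- **Lovász' theorem.**  If `Hom(K₂, H)` is `k`-connected for a loopless graph `H` and some
`k ≥ -1`, then `χ(H) ≥ k + 3`. -/
theorem lovasz_theorem (H : Graph) (hH : H.Loopless) (k : ℤ) (hk : -1 ≤ k)
    (hconn : KConnected k (HomComplex (completeGraph 2) H)) :
    k + 3 ≤ (chromaticNumber H : ℤ) := by
  obtain ⟨φ⟩ := nonempty_graphHom_chromaticNumber hH
  exact hconn.add_three_le_of_graphHom hk φ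

end Lovasz
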